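/- arXiv:2603.25211 — 7 statements merged into one kernel-verified Lean document; each statement's English description precedes it below -/
import Mathlib

section
/- (Sandwich property.) For every γ ∈ [−h, h] and every φ ∈ ℝ, S_{−h}(φ) ≤ S_γ(φ) ≤ S_h(φ); explicitly, S_{−h}(φ) equals (φ−h)²/(2L) for φ > h, (φ+h)²/(2L) for φ < −h, and 0 for |φ| ≤ h, while S_h(φ) equals ((φ+h)² − h²)/(2L) for φ > 0, ((φ−h)² − h²)/(2L) for φ < 0, and 0 at φ = 0. -/
/-- The family of storage functions `S_γ` for the backlash inductor. -/
noncomputable def Sfam (L h γ φ : ℝ) : ℝ :=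
  if (h - γ) / 2 < φ then (1 / (2 * L)) * ((φ + γ) ^ 2 - ((h + γ) / 2) ^ 2)
  else if φ < -((h - γ) / 2) then (1 / (2 * L)) * ((φ - γ) ^ 2 - ((h + γ) / 2) ^ 2)
  else 0

/-!
Writing `t = (|φ| - (h - γ) / 2)⁺` for the distance of `φ` from the dead zone
`[-(h - γ) / 2, (h - γ) / 2]`, the difference of squares factors as
`2 L S_γ(φ) = t (t + (h + γ))`. For `γ ∈ [-h, h]` both factors are nonnegative and nondecreasing in
`γ`, hence so is `S_γ(φ)`.
-/

section

variable {L h γ φ : ℝ}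

lemma Sfam_eq_posPart_mul (hγ : γ ≤ h) :
    Sfam L h γ φ =
      (|φ| - (h - γ) / 2)⁺ * ((|φ| - (h - γ) / 2)⁺ + (h + γ)) / (2 * L) := by
  rw [Sfam]
  split_ifs with h_right h_left
  · have h_abs : |φ| = φ := abs_of_nonneg (by linarith)
    rw [h_abs, posPart_of_nonneg (by linarith)]
    ring
  · have h_abs : |φ| = -φ := abs_of_nonpos (by linarith)
    rw [h_abs, posPart_of_nonneg (by linarith)]
    ring
  · have h_abs : |φ| ≤ (h - γ) / 2 := abs_le.2 ⟨not_lt.1 h_left, not_lt.1 h_right⟩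
    rw [posPart_of_nonpos (sub_nonpos.2 h_abs), zero_mul, zero_div]

lemma monotoneOn_Sfam (hL : 0 ≤ L) : MonotoneOn (fun γ ↦ Sfam L h γ φ) (Set.Icc (-h) h) := by
  intro γ hγ δ hδ hγδ
  have h_sum : 0 ≤ h + γ := neg_le_iff_add_nonneg'.1 hγ.1
  have h_dist : (|φ| - (h - γ) / 2)⁺ ≤ (|φ| - (h - δ) / 2)⁺ := posPart_mono (by gcongr)
  simp only [Sfam_eq_posPart_mul hγ.2, Sfam_eq_posPart_mul hδ.2]
  gcongr

lemma Sfam_neg_self (hh : 0 ≤ h) : Sfam L h (-h) φ = (|φ| - h)⁺ ^ 2 / (2 * L) := by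
  have h_half : (h - -h) / 2 = h := by ring
  rw [Sfam_eq_posPart_mul (neg_le_self hh), h_half, add_neg_cancel, add_zero, sq]

lemma Sfam_self : Sfam L h h φ = ((|φ| + h) ^ 2 - h ^ 2) / (2 * L) := by
  rw [Sfam_eq_posPart_mul le_rfl, sub_self, zero_div, sub_zero, posPart_of_nonneg (abs_nonneg φ)]
  ring

end

theorem stmt4 (L h : ℝ) (hL : 0 < L) (hh : 0 ≤ h) :
    (∀ γ ∈ Set.Icc (-h) h, ∀ φ : ℝ,
        Sfam L h (-h) φ ≤ Sfam L h γ φ ∧ Sfam L h γ φ ≤ Sfam L h h φ) ∧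
    (∀ φ : ℝ, h < φ → Sfam L h (-h) φ = (φ - h) ^ 2 / (2 * L)) ∧
    (∀ φ : ℝ, φ < -h → Sfam L h (-h) φ = (φ + h) ^ 2 / (2 * L)) ∧
    (∀ φ : ℝ, |φ| ≤ h → Sfam L h (-h) φ = 0) ∧
    (∀ φ : ℝ, 0 < φ → Sfam L h h φ = ((φ + h) ^ 2 - h ^ 2) / (2 * L)) ∧
    (∀ φ : ℝ, φ < 0 → Sfam L h h φ = ((φ - h) ^ 2 - h ^ 2) / (2 * L)) ∧
    Sfam L h h 0 = 0 := by
  have h_mem : h ∈ Set.Icc (-h) h := ⟨neg_le_self hh, le_rfl⟩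
  have h_neg_mem : -h ∈ Set.Icc (-h) h := ⟨le_rfl, neg_le_self hh⟩
  refine ⟨fun γ hγ φ ↦
      ⟨monotoneOn_Sfam hL.le h_neg_mem hγ hγ.1, monotoneOn_Sfam hL.le hγ h_mem hγ.2⟩,
    fun φ hφ ↦ ?_, fun φ hφ ↦ ?_, fun φ hφ ↦ ?_, fun φ hφ ↦ ?_, fun φ hφ ↦ ?_, ?_⟩
  · rw [Sfam_neg_self hh, abs_of_pos (hh.trans_lt hφ), posPart_of_nonneg (sub_nonneg.2 hφ.le)]
  · rw [Sfam_neg_self hh, abs_of_neg (by linarith), posPart_of_nonneg (by linarith)]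
    ring
  · rw [Sfam_neg_self hh, posPart_of_nonpos (sub_nonpos.2 hφ), zero_pow two_ne_zero, zero_div]
  · rw [Sfam_self, abs_of_pos hφ]
  · rw [Sfam_self, abs_of_neg hφ]
    ring
  · rw [Sfam_self, abs_zero, zero_add, sub_self, zero_div]
end

section
/- (Proposition 1: dissipation inequality for the family of storage functions.) For every γ ∈ [−h, h], every admissible backlash trajectory (φ, I), and all t₀ ≤ t₁, one has S_γ(φ(t₁)) ≤ S_γ(φ(t₀)) + ∫_{t₀}^{t₁} I(t)·φ'(t) dt; that is, each S_γ is a storage function for the backlash inductor with respect to the supply rate I·V, where V = φ'. -/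
/-- A pair `(φ, I)` is an admissible backlash trajectory. -/
def AdmissibleBacklash (L h : ℝ) (φ I : ℝ → ℝ) : Prop :=
  ContDiff ℝ 1 φ ∧
  ∀ t : ℝ, (0 < deriv φ t → I t = (φ t + h) / L) ∧
           (deriv φ t < 0 → I t = (φ t - h) / L)

/-!
With the dead-zone function `d(φ) = max (|φ| - (h - γ) / 2) 0`, the storage function has the closed
form `S_γ(φ) = (d(φ)² + (h + γ) d(φ)) / (2L)`. Here `d` is `1`-Lipschitz, and `d(φ)² - φ²` is
`(h - γ)`-Lipschitz (it is minus a Huber function), so an increment of `S_γ` exceeds the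
corresponding increment of `φ² / (2L)` by at most `((h - γ) + (h + γ)) |Δφ| / (2L) = h |Δφ| / L`.
On the other side, the backlash law gives `I φ' = (φ φ' + h |φ'|) / L`, so the supplied energy is
the increment of `φ² / (2L)` plus `h / L` times the total variation of `φ`, which is at least
`|Δφ|`.
-/

open MeasureTheory
open scoped Interval

section DeadZone

/-- The distance from `x` to the dead zone `[-a, a]` (for `0 ≤ a`); the storage functions are
quadratic polynomials in it. -/
noncomputable def deadZone (a x : ℝ) : ℝ := max (|x| - a) 0

theorem deadZone_of_abs_le {a x : ℝ} (hx : |x| ≤ a) : deadZone a x = 0 :=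
  max_eq_right (sub_nonpos.2 hx)

theorem deadZone_of_le_abs {a x : ℝ} (hx : a ≤ |x|) : deadZone a x = |x| - a :=
  max_eq_left (sub_nonneg.2 hx)

theorem abs_deadZone_sub_deadZone_le (a x y : ℝ) : |deadZone a x - deadZone a y| ≤ |x - y| :=
  calc |deadZone a x - deadZone a y|
      ≤ |(|x| - a) - (|y| - a)| := abs_max_sub_max_le_abs _ _ _
    _ = |(|x| - |y|)| := by rw [sub_sub_sub_cancel_right]
    _ ≤ |x - y| := abs_abs_sub_abs_le x y

theorem deadZone_sq_sub_deadZone_sq_le {a : ℝ} (ha : 0 ≤ a) (x y : ℝ) :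
    deadZone a x ^ 2 - deadZone a y ^ 2 ≤ x ^ 2 - y ^ 2 + 2 * a * |x - y| := by
  have hxy : a * (|y| - |x|) ≤ a * |x - y| :=
    mul_le_mul_of_nonneg_left (abs_sub_comm x y ▸ abs_sub_abs_le_abs_sub y x) ha
  have hdist : 0 ≤ a * |x - y| := mul_nonneg ha (abs_nonneg _)
  rw [← sq_abs x, ← sq_abs y]
  rcases le_total |x| a with hx | hx <;> rcases le_total |y| a with hy | hy
  · rw [deadZone_of_abs_le hx, deadZone_of_abs_le hy]
    -- Here the claim is that squaring is `2 * a`-Lipschitz on `[-a, a]`.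
    rcases le_total |x| |y| with horder | horder <;> nlinarith [abs_nonneg x, abs_nonneg y]
  · rw [deadZone_of_abs_le hx, deadZone_of_le_abs hy]
    nlinarith [sq_nonneg (|x| - a)]
  · rw [deadZone_of_le_abs hx, deadZone_of_abs_le hy]
    nlinarith [abs_nonneg y]
  · rw [deadZone_of_le_abs hx, deadZone_of_le_abs hy]
    linarith

end DeadZone

section Storage

variable {h γ : ℝ}

theorem Sfam_eq_deadZone (L : ℝ) (hγ : γ ≤ h) (φ : ℝ) :
    Sfam L h γ φ =
      (deadZone ((h - γ) / 2) φ ^ 2 + (h + γ) * deadZone ((h - γ) / 2) φ) / (2 * L) := by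
  have ha : 0 ≤ (h - γ) / 2 := by linarith
  unfold Sfam
  split_ifs with hpos hneg
  · have habs : |φ| = φ := abs_of_pos (ha.trans_lt hpos)
    rw [deadZone_of_le_abs (by linarith), habs]
    ring
  · have habs : |φ| = -φ := abs_of_neg (by linarith)
    rw [deadZone_of_le_abs (by linarith), habs]
    ring
  · rw [deadZone_of_abs_le (abs_le.2 ⟨not_lt.1 hneg, not_lt.1 hpos⟩)]
    simp

theorem Sfam_sub_Sfam_le {L : ℝ} (hL : 0 < L) (hγ : γ ∈ Set.Icc (-h) h) (x y : ℝ) :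
    Sfam L h γ x - Sfam L h γ y ≤ ((x ^ 2 - y ^ 2) / 2 + h * |x - y|) / L := by
  obtain ⟨hγ_ge, hγ_le⟩ := hγ
  rw [Sfam_eq_deadZone L hγ_le, Sfam_eq_deadZone L hγ_le]
  set d := deadZone ((h - γ) / 2)
  have hquad : d x ^ 2 - d y ^ 2 ≤ x ^ 2 - y ^ 2 + 2 * ((h - γ) / 2) * |x - y| :=
    deadZone_sq_sub_deadZone_sq_le (by linarith) x y
  have hlin : (h + γ) * (d x - d y) ≤ (h + γ) * |x - y| :=
    mul_le_mul_of_nonneg_left (le_of_abs_le (abs_deadZone_sub_deadZone_le _ x y)) (by linarith)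
  calc (d x ^ 2 + (h + γ) * d x) / (2 * L) - (d y ^ 2 + (h + γ) * d y) / (2 * L)
      = (d x ^ 2 - d y ^ 2 + (h + γ) * (d x - d y)) / (2 * L) := by ring
    _ ≤ (x ^ 2 - y ^ 2 + 2 * ((h - γ) / 2) * |x - y| + (h + γ) * |x - y|) / (2 * L) := by gcongr
    _ = ((x ^ 2 - y ^ 2) / 2 + h * |x - y|) / L := by ring

end Storage

section AbsolutelyContinuous

variable {f : ℝ → ℝ} {a b : ℝ}

theorem integral_mul_deriv_self (hf : AbsolutelyContinuousOnInterval f a b) :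
    ∫ t in a..b, f t * deriv f t = (f b ^ 2 - f a ^ 2) / 2 := by
  have hparts := hf.integral_mul_deriv_eq_deriv_mul hf
  simp only [mul_comm (deriv f _)] at hparts
  linarith

theorem abs_sub_le_integral_abs_deriv (hab : a ≤ b) (hf : AbsolutelyContinuousOnInterval f a b) :
    |f b - f a| ≤ ∫ t in a..b, |deriv f t| :=
  hf.integral_deriv_eq_sub ▸ intervalIntegral.abs_integral_le_integral_abs hab

end AbsolutelyContinuous

section Supply

variable {L h : ℝ}

/-- The constitutive law of the backlash inductor at one instant, relating the flux `φ`, the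
voltage `V = φ'` and the current `I`. The current is left unconstrained when `V = 0`. -/
def BacklashLaw (L h φ V I : ℝ) : Prop :=
  (0 < V → I = (φ + h) / L) ∧ (V < 0 → I = (φ - h) / L)

theorem BacklashLaw.mul_eq {φ V I : ℝ} (hlaw : BacklashLaw L h φ V I) :
    I * V = (φ * V + h * |V|) / L := by
  rcases lt_trichotomy V 0 with hV | rfl | hV
  · rw [hlaw.2 hV, abs_of_neg hV]
    ring
  · simp
  · rw [hlaw.1 hV, abs_of_pos hV]
    ring

theorem integral_mul_deriv_of_backlashLaw {φ I : ℝ → ℝ} {t₀ t₁ : ℝ}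
    (hφ : AbsolutelyContinuousOnInterval φ t₀ t₁)
    (hlaw : ∀ᵐ t, t ∈ Ι t₀ t₁ → BacklashLaw L h (φ t) (deriv φ t) (I t)) :
    ∫ t in t₀..t₁, I t * deriv φ t =
      ((φ t₁ ^ 2 - φ t₀ ^ 2) / 2 + h * ∫ t in t₀..t₁, |deriv φ t|) / L := by
  have hderiv : IntervalIntegrable (deriv φ) volume t₀ t₁ := hφ.intervalIntegrable_deriv
  calc ∫ t in t₀..t₁, I t * deriv φ t
      = ∫ t in t₀..t₁, (φ t * deriv φ t + h * |deriv φ t|) / L :=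
        intervalIntegral.integral_congr_ae (hlaw.mono fun _ ht hmem ↦ (ht hmem).mul_eq)
    _ = ((∫ t in t₀..t₁, φ t * deriv φ t) + h * ∫ t in t₀..t₁, |deriv φ t|) / L := by
        rw [intervalIntegral.integral_div, intervalIntegral.integral_add
          (hderiv.continuousOn_mul hφ.continuousOn) (hderiv.abs.const_mul h),
          intervalIntegral.integral_const_mul]
    _ = ((φ t₁ ^ 2 - φ t₀ ^ 2) / 2 + h * ∫ t in t₀..t₁, |deriv φ t|) / L := by
        rw [integral_mul_deriv_self hφ]

end Supply

theorem stmt6_general {L h γ : ℝ} (hL : 0 < L) (hγ : γ ∈ Set.Icc (-h) h) {φ I : ℝ → ℝ} {t₀ t₁ : ℝ}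
    (ht : t₀ ≤ t₁) (hφ : AbsolutelyContinuousOnInterval φ t₀ t₁)
    (hlaw : ∀ᵐ t, t ∈ Ι t₀ t₁ → BacklashLaw L h (φ t) (deriv φ t) (I t)) :
    Sfam L h γ (φ t₁) ≤ Sfam L h γ (φ t₀) + ∫ t in t₀..t₁, I t * deriv φ t := by
  have hh : 0 ≤ h := neg_le_self_iff.1 (hγ.1.trans hγ.2)
  rw [← sub_le_iff_le_add']
  calc Sfam L h γ (φ t₁) - Sfam L h γ (φ t₀)
      ≤ ((φ t₁ ^ 2 - φ t₀ ^ 2) / 2 + h * |φ t₁ - φ t₀|) / L := Sfam_sub_Sfam_le hL hγ _ _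
    _ ≤ ((φ t₁ ^ 2 - φ t₀ ^ 2) / 2 + h * ∫ t in t₀..t₁, |deriv φ t|) / L := by
        gcongr
        exact abs_sub_le_integral_abs_deriv ht hφ
    _ = ∫ t in t₀..t₁, I t * deriv φ t := (integral_mul_deriv_of_backlashLaw hφ hlaw).symm

theorem stmt6 (L h : ℝ) (hL : 0 < L) (hh : 0 ≤ h) :
    ∀ γ ∈ Set.Icc (-h) h, ∀ φ I : ℝ → ℝ, AdmissibleBacklash L h φ I →
      ∀ t₀ t₁ : ℝ, t₀ ≤ t₁ →
        Sfam L h γ (φ t₁) ≤ Sfam L h γ (φ t₀) + ∫ t in t₀..t₁, I t * deriv φ t := by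
  rintro γ hγ φ I ⟨hφ, hlaw⟩ t₀ t₁ ht
  exact stmt6_general hL hγ ht hφ.contDiffOn.absolutelyContinuousOnInterval
    (.of_forall fun t _ ↦ hlaw t)
end

section
/- (Energy dissipated per hysteresis cycle.) Let (φ, I) be an admissible backlash trajectory and let t₀ ≤ t₁ ≤ t₂ be such that φ is monotone nondecreasing on [t₀, t₁], monotone nonincreasing on [t₁, t₂], φ(t₀) = φ(t₂) = φ₁ and φ(t₁) = φ₂. Then the total energy supplied over the closed cycle equals the enclosed area: ∫_{t₀}^{t₂} I(t)·φ'(t) dt = (2h/L)·(φ₂ − φ₁). -/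
/-
On the rising branch `L * I = φ + h`, on the falling branch `L * I = φ - h`, and where `φ' = 0`
no power is supplied; in all three cases `L * (I * φ') = φ * φ' + h * |φ'|`. The first term is the
derivative of `φ ^ 2 / 2` and integrates to zero over a closed cycle, so the energy supplied is
`h / L` times the total variation of `φ`, which is `2 * (φ₂ - φ₁)` for a single rise and fall.
-/

open MeasureTheory Set

section AbsolutelyContinuous

variable {f : ℝ → ℝ} {a b c : ℝ}

theorem integral_self_mul_deriv (hf : AbsolutelyContinuousOnInterval f a b) :
    ∫ x in a..b, f x * deriv f x = (f b ^ 2 - f a ^ 2) / 2 := by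
  have by_parts := hf.integral_mul_deriv_eq_deriv_mul hf
  simp only [mul_comm (deriv f _)] at by_parts
  linarith

theorem integral_abs_deriv_of_monotoneOn (hab : a ≤ b)
    (hf : AbsolutelyContinuousOnInterval f a b) (hmono : MonotoneOn f (Icc a b)) :
    ∫ x in a..b, |deriv f x| = f b - f a := by
  have deriv_nonneg : ∀ x ∈ Ioo a b, 0 ≤ deriv f x := fun x hx ↦ by
    rw [← derivWithin_of_mem_nhds (Icc_mem_nhds hx.1 hx.2)]
    exact hmono.derivWithin_nonneg
  rw [← hf.integral_deriv_eq_sub]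
  exact intervalIntegral.integral_congr_Ioo_of_le hab fun x hx ↦ abs_of_nonneg (deriv_nonneg x hx)

theorem integral_abs_deriv_of_antitoneOn (hab : a ≤ b)
    (hf : AbsolutelyContinuousOnInterval f a b) (hanti : AntitoneOn f (Icc a b)) :
    ∫ x in a..b, |deriv f x| = f a - f b := by
  have h := integral_abs_deriv_of_monotoneOn hab hf.neg hanti.neg
  simp only [deriv.neg, abs_neg, Pi.neg_apply] at h
  linarith

theorem integral_abs_deriv_of_monotoneOn_of_antitoneOn (hab : a ≤ b) (hbc : b ≤ c)
    (hf : AbsolutelyContinuousOnInterval f a c)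
    (hmono : MonotoneOn f (Icc a b)) (hanti : AntitoneOn f (Icc b c)) :
    ∫ x in a..c, |deriv f x| = 2 * f b - f a - f c := by
  have hb : b ∈ uIcc a c := mem_uIcc_of_le hab hbc
  have hf_left : AbsolutelyContinuousOnInterval f a b := hf.mono (uIcc_subset_uIcc_left hb)
  have hf_right : AbsolutelyContinuousOnInterval f b c := hf.mono (uIcc_subset_uIcc_right hb)
  rw [← intervalIntegral.integral_add_adjacent_intervals hf_left.intervalIntegrable_deriv.abs
      hf_right.intervalIntegrable_deriv.abs,
    integral_abs_deriv_of_monotoneOn hab hf_left hmono,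
    integral_abs_deriv_of_antitoneOn hbc hf_right hanti]
  ring

end AbsolutelyContinuous

namespace AdmissibleBacklash

variable {L h : ℝ} {φ I : ℝ → ℝ}

theorem absolutelyContinuousOnInterval (hadm : AdmissibleBacklash L h φ I) (a b : ℝ) :
    AbsolutelyContinuousOnInterval φ a b :=
  hadm.1.contDiffOn.absolutelyContinuousOnInterval

theorem mul_mul_deriv_eq (hadm : AdmissibleBacklash L h φ I) (hL : L ≠ 0) (t : ℝ) :
    L * (I t * deriv φ t) = φ t * deriv φ t + h * |deriv φ t| := by
  rcases lt_trichotomy (deriv φ t) 0 with falling | stationary | rising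
  · rw [(hadm.2 t).2 falling, abs_of_neg falling]
    field_simp
    ring
  · simp [stationary]
  · rw [(hadm.2 t).1 rising, abs_of_pos rising]
    field_simp

theorem mul_integral_mul_deriv_eq (hadm : AdmissibleBacklash L h φ I) (hL : L ≠ 0) (a b : ℝ) :
    L * ∫ t in a..b, I t * deriv φ t =
      (φ b ^ 2 - φ a ^ 2) / 2 + h * ∫ t in a..b, |deriv φ t| := by
  have hφ := hadm.absolutelyContinuousOnInterval a b
  have stored_integrable : IntervalIntegrable (fun t ↦ φ t * deriv φ t) volume a b :=
    hφ.intervalIntegrable_deriv.continuousOn_mul hφ.continuousOn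
  have dissipated_integrable : IntervalIntegrable (fun t ↦ h * |deriv φ t|) volume a b :=
    hφ.intervalIntegrable_deriv.abs.const_mul h
  calc L * ∫ t in a..b, I t * deriv φ t
      = ∫ t in a..b, (φ t * deriv φ t + h * |deriv φ t|) := by
        simp only [← intervalIntegral.integral_const_mul, hadm.mul_mul_deriv_eq hL]
    _ = (∫ t in a..b, φ t * deriv φ t) + h * ∫ t in a..b, |deriv φ t| := by
        rw [intervalIntegral.integral_add stored_integrable dissipated_integrable,
          intervalIntegral.integral_const_mul]
    _ = (φ b ^ 2 - φ a ^ 2) / 2 + h * ∫ t in a..b, |deriv φ t| := by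
        rw [integral_self_mul_deriv hφ]

end AdmissibleBacklash

theorem stmt7_general {L h : ℝ} (hL : L ≠ 0) {φ I : ℝ → ℝ} (hadm : AdmissibleBacklash L h φ I)
    {t₀ t₁ t₂ : ℝ} (h01 : t₀ ≤ t₁) (h12 : t₁ ≤ t₂)
    (hmono : MonotoneOn φ (Icc t₀ t₁)) (hanti : AntitoneOn φ (Icc t₁ t₂)) :
    ∫ t in t₀..t₂, I t * deriv φ t =
      ((φ t₂ ^ 2 - φ t₀ ^ 2) / 2 + h * (2 * φ t₁ - φ t₀ - φ t₂)) / L := by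
  rw [eq_div_iff hL, mul_comm, hadm.mul_integral_mul_deriv_eq hL,
    integral_abs_deriv_of_monotoneOn_of_antitoneOn h01 h12
      (hadm.absolutelyContinuousOnInterval t₀ t₂) hmono hanti]

theorem stmt7 (L h : ℝ) (hL : 0 < L) (hh : 0 ≤ h)
    (φ I : ℝ → ℝ) (hadm : AdmissibleBacklash L h φ I)
    (t₀ t₁ t₂ φ₁ φ₂ : ℝ) (h01 : t₀ ≤ t₁) (h12 : t₁ ≤ t₂)
    (hmono : MonotoneOn φ (Set.Icc t₀ t₁))
    (hanti : AntitoneOn φ (Set.Icc t₁ t₂))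
    (h0 : φ t₀ = φ₁) (h2 : φ t₂ = φ₁) (h1 : φ t₁ = φ₂) :
    ∫ t in t₀..t₂, I t * deriv φ t = (2 * h / L) * (φ₂ - φ₁) := by
  rw [stmt7_general hL.ne' hadm h01 h12 hmono hanti, h0, h1, h2]
  ring
end

section
/- (Achievability of the available storage.) Let (φ, I) be an admissible backlash trajectory and let 0 ≤ T be such that φ'(t) ≤ 0 for all t ∈ [0, T], φ(0) = φ₀, and φ(T) = h. Then the extracted energy equals −∫_0^T I(t)·φ'(t) dt = (φ₀ − h)²/(2L). -/
/-!
Where `φ' = 0` the integrand `I * φ'` vanishes whatever the value of `I`, and where `φ' < 0` the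
current is a function of the flux alone, namely `(φ - h) / L`. So on a descending trajectory the
work depends only on the end values of the flux: substituting `u = φ t` turns it into the integral
of `(u - h) / L`.
-/

open Set intervalIntegral

theorem integral_mul_deriv_eq_of_deriv_ne_zero {f f' g J : ℝ → ℝ} {a b : ℝ}
    (hf : ContinuousOn f (uIcc a b))
    (hff' : ∀ t ∈ Ioo (min a b) (max a b), HasDerivWithinAt f (f' t) (Ioi t) t)
    (hf' : ContinuousOn f' (uIcc a b)) (hg : ContinuousOn g (f '' uIcc a b))
    (hJ : ∀ t ∈ uIcc a b, f' t ≠ 0 → J t = g (f t)) :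
    ∫ t in a..b, J t * f' t = ∫ u in f a..f b, g u := by
  have hcongr : EqOn (fun t ↦ J t * f' t) (fun t ↦ (g ∘ f) t * f' t) (uIcc a b) := by
    intro t ht
    rcases eq_or_ne (f' t) 0 with hzero | hne
    · simp only [hzero, mul_zero]
    · simp only [hJ t ht hne, Function.comp_apply]
  rw [integral_congr hcongr, integral_comp_mul_deriv'' hf hff' hf' hg]

theorem integral_sub_const_div (a b c d : ℝ) :
    ∫ u in a..b, (u - c) / d = ((b - c) ^ 2 - (a - c) ^ 2) / (2 * d) := by
  rw [integral_div, integral_comp_sub_right (fun u ↦ u), integral_id, div_div]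

namespace AdmissibleBacklash

variable {L h a b : ℝ} {φ I : ℝ → ℝ}

theorem integral_mul_deriv_of_deriv_nonpos (hadm : AdmissibleBacklash L h φ I)
    (hdec : ∀ t ∈ uIcc a b, deriv φ t ≤ 0) :
    ∫ t in a..b, I t * deriv φ t = ∫ u in φ a..φ b, (u - h) / L := by
  obtain ⟨hφ, hI⟩ := hadm
  exact integral_mul_deriv_eq_of_deriv_ne_zero hφ.continuous.continuousOn
    (fun t _ ↦ (hφ.differentiable one_ne_zero t).hasDerivAt.hasDerivWithinAt)
    (hφ.continuous_deriv le_rfl).continuousOn (by fun_prop)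
    (fun t ht hne ↦ (hI t).2 ((hdec t ht).lt_of_ne hne))

end AdmissibleBacklash

theorem stmt8_general {L h : ℝ} (hL : L ≠ 0) {φ I : ℝ → ℝ} (hadm : AdmissibleBacklash L h φ I)
    {a b : ℝ} (hdec : ∀ t ∈ uIcc a b, deriv φ t ≤ 0) :
    -∫ t in a..b, I t * deriv φ t = ((φ a - h) ^ 2 - (φ b - h) ^ 2) / (2 * L) := by
  rw [hadm.integral_mul_deriv_of_deriv_nonpos hdec, integral_sub_const_div]
  field_simp
  ring

theorem stmt8 (L h : ℝ) (hL : 0 < L) (hh : 0 ≤ h)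
    (φ I : ℝ → ℝ) (hadm : AdmissibleBacklash L h φ I)
    (T φ₀ : ℝ) (hT : 0 ≤ T)
    (hdec : ∀ t ∈ Set.Icc (0 : ℝ) T, deriv φ t ≤ 0)
    (h0 : φ 0 = φ₀) (hT' : φ T = h) :
    -∫ t in (0 : ℝ)..T, I t * deriv φ t = (φ₀ - h) ^ 2 / (2 * L) := by
  rw [stmt8_general hL.ne' hadm (by rwa [uIcc_of_le hT]), h0, hT', sub_self, zero_pow two_ne_zero,
    sub_zero]
end

section
/- (Energy balance of the parallel RLC network with backlash inductor.) For all t₀ ≤ t₁, H(t₁) − H(t₀) = ∫_{t₀}^{t₁} ( u(t)·V(t) − V(t)²/R − (h/L)·|V(t)| ) dt; that is, the change of stored energy equals the supplied energy minus the resistive loss V²/R and the hysteretic loss (h/L)|V|. -/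
/-!
Along `φ' = V`, `Q' = i - φ / L`, the lossless exchange between the linear inductor and the
capacitor cancels, so the stored energy changes at the rate `i * V`. Here `i` is the source current
minus the resistor current `V / R` and the hysteresis current `(h / L) * s`; the latter dissipates
exactly `(h / L) * |V|`, because `s` agrees with the sign of `V` wherever `V ≠ 0`. The fundamental
theorem of calculus then needs the energy only to be continuous and differentiable off a countable
set, such as the instants at which `s` jumps.
-/

open MeasureTheory Set

open scoped Interval

/-- The energy stored in a linear inductor of inductance `L` carrying flux `φ` and a linear
capacitor of capacitance `C` carrying charge `Q`, i.e. the Hamiltonian of an LC circuit. -/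
noncomputable def storedEnergy (L C φ Q : ℝ) : ℝ :=
  φ ^ 2 / (2 * L) + Q ^ 2 / (2 * C)

section PowerBalance

variable {L C : ℝ} {φ Q : ℝ → ℝ} {t : ℝ}

theorem hasDerivAt_storedEnergy {φ' Q' : ℝ} (hφ : HasDerivAt φ φ' t) (hQ : HasDerivAt Q Q' t) :
    HasDerivAt (fun τ => storedEnergy L C (φ τ) (Q τ)) (φ t / L * φ' + Q t / C * Q') t := by
  have hsum := ((hφ.fun_pow 2).div_const (2 * L)).add ((hQ.fun_pow 2).div_const (2 * C))
  exact hsum.congr_deriv (by ring)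

theorem hasDerivAt_storedEnergy_of_current {i : ℝ} (hφ : HasDerivAt φ (Q t / C) t)
    (hQ : HasDerivAt Q (i - φ t / L) t) :
    HasDerivAt (fun τ => storedEnergy L C (φ τ) (Q τ)) (i * (Q t / C)) t :=
  (hasDerivAt_storedEnergy hφ hQ).congr_deriv (by ring)

theorem hasDerivAt_storedEnergy_of_backlash {R h u s : ℝ} (hφ : HasDerivAt φ (Q t / C) t)
    (hQ : HasDerivAt Q (u - Q t / (R * C) - φ t / L - h / L * s) t)
    (hs : s * (Q t / C) = |Q t / C|) :
    HasDerivAt (fun τ => storedEnergy L C (φ τ) (Q τ))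
      (u * (Q t / C) - (Q t / C) ^ 2 / R - h / L * |Q t / C|) t := by
  have hcurrent : HasDerivAt Q ((u - Q t / C / R - h / L * s) - φ t / L) t :=
    hQ.congr_deriv (by ring)
  refine (hasDerivAt_storedEnergy_of_current hφ hcurrent).congr_deriv ?_
  rw [← hs]
  ring

end PowerBalance

theorem intervalIntegrable_power {μ : Measure ℝ} [IsLocallyFiniteMeasure μ] {u V : ℝ → ℝ}
    {a b : ℝ} (R k : ℝ) (hu : IntervalIntegrable u μ a b) (hV : ContinuousOn V [[a, b]]) :
    IntervalIntegrable (fun t => u t * V t - V t ^ 2 / R - k * |V t|) μ a b := by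
  have hsupply : IntervalIntegrable (fun t => u t * V t) μ a b := hu.mul_continuousOn hV
  have hresistive : IntervalIntegrable (fun t => V t ^ 2 / R) μ a b :=
    ((hV.pow 2).div_const R).intervalIntegrable
  have hhysteretic : IntervalIntegrable (fun t => k * |V t|) μ a b :=
    (hV.abs.const_mul k).intervalIntegrable
  exact (hsupply.sub hresistive).sub hhysteretic

theorem stmt16_general {L C R : ℝ} (_hL : L ≠ 0) (_hC : C ≠ 0) (_hR : R ≠ 0) (h : ℝ)
    {φ Q u s : ℝ → ℝ} {t₀ t₁ : ℝ} {N : Set ℝ} (hN : N.Countable)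
    (hφ : ContinuousOn φ [[t₀, t₁]]) (hQ : ContinuousOn Q [[t₀, t₁]])
    (hu : IntervalIntegrable u volume t₀ t₁)
    (hs : ∀ t ∈ uIoo t₀ t₁ \ N, s t * (Q t / C) = |Q t / C|)
    (hφ' : ∀ t ∈ uIoo t₀ t₁ \ N, HasDerivAt φ (Q t / C) t)
    (hQ' : ∀ t ∈ uIoo t₀ t₁ \ N,
      HasDerivAt Q (u t - Q t / (R * C) - φ t / L - h / L * s t) t) :
    storedEnergy L C (φ t₁) (Q t₁) - storedEnergy L C (φ t₀) (Q t₀) =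
      ∫ t in t₀..t₁, (u t * (Q t / C) - (Q t / C) ^ 2 / R - h / L * |Q t / C|) := by
  have henergy : ContinuousOn (fun t => storedEnergy L C (φ t) (Q t)) [[t₀, t₁]] :=
    ((hφ.pow 2).div_const (2 * L)).add ((hQ.pow 2).div_const (2 * C))
  have hpower : ∀ t ∈ uIoo t₀ t₁ \ N, HasDerivAt (fun τ => storedEnergy L C (φ τ) (Q τ))
      (u t * (Q t / C) - (Q t / C) ^ 2 / R - h / L * |Q t / C|) t := fun t ht =>
    hasDerivAt_storedEnergy_of_backlash (hφ' t ht) (hQ' t ht) (hs t ht)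
  exact (integral_eq_of_hasDerivAt_off_countable _ _ hN henergy hpower
    (intervalIntegrable_power R (h / L) hu (hQ.div_const C))).symm

theorem stmt16 (L C R h : ℝ) (hL : 0 < L) (hC : 0 < C) (hR : 0 < R) (hh : 0 ≤ h)
    (φ Q u s : ℝ → ℝ)
    (hφ : Differentiable ℝ φ) (hQ : Differentiable ℝ Q) (hu : Continuous u)
    (hs1 : ∀ t, |s t| ≤ 1) (hs2 : ∀ t, s t * (Q t / C) = |Q t / C|)
    (hode1 : ∀ t, deriv φ t = Q t / C)
    (hode2 : ∀ t, deriv Q t = u t - Q t / (R * C) - φ t / L - (h / L) * s t)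
    (V : ℝ → ℝ) (hV : ∀ t, V t = Q t / C)
    (H : ℝ → ℝ) (hH : ∀ t, H t = φ t ^ 2 / (2 * L) + Q t ^ 2 / (2 * C)) :
    ∀ t₀ t₁ : ℝ, t₀ ≤ t₁ →
      H t₁ - H t₀ =
        ∫ t in t₀..t₁, (u t * V t - V t ^ 2 / R - (h / L) * |V t|) := by
  intro t₀ t₁ _
  simp only [hH, hV]
  exact stmt16_general hL.ne' hC.ne' hR.ne' h countable_empty hφ.continuous.continuousOn
    hQ.continuous.continuousOn (hu.intervalIntegrable t₀ t₁) (fun t _ => hs2 t)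
    (fun t _ => hode1 t ▸ (hφ t).hasDerivAt) (fun t _ => hode2 t ▸ (hQ t).hasDerivAt)
end

section
/- (Energy balance of the series RLC network with backlash inductor.) For all t₀ ≤ t₁, H(t₁) − H(t₀) = ∫_{t₀}^{t₁} ( I(t)·v(t) − R·I(t)² − (h/L)·|φ'(t)| ) dt; that is, the change of stored energy equals the supplied energy minus the resistive loss R·I² and the hysteretic loss (h/L)|φ'|. -/
/-!
In terms of the voltages, the source power splits as `I v = I φ' + R I² + I Q / C`. The inductor
power is `I φ' = (φ / L) φ' + (h / L) |φ'|`, because `s φ' = |φ'|`, and the capacitor power is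
`(Q / C) Q'`. The terms `(φ / L) φ'` and `(Q / C) Q'` are the derivatives of `φ² / (2 L)` and
`Q² / (2 C)`, and as `φ` and `Q` are absolutely continuous, these energies are the integrals of
their almost everywhere derivatives, even across jumps of the hysteresis selector `s`.
-/

open MeasureTheory
open scoped Interval

theorem absolutelyContinuousOnInterval_of_deriv_eq_continuous {E : Type*}
    [NormedAddCommGroup E] [NormedSpace ℝ E] {f f' : ℝ → E} (hf : Differentiable ℝ f)
    (hderiv : ∀ t, deriv f t = f' t) (hf' : Continuous f') (a b : ℝ) :
    AbsolutelyContinuousOnInterval f a b := by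
  have hC1 : ContDiff ℝ 1 f := contDiff_one_iff_deriv.mpr ⟨hf, funext hderiv ▸ hf'⟩
  exact hC1.contDiffOn.absolutelyContinuousOnInterval

section AbsolutelyContinuous

variable {f : ℝ → ℝ} {a b : ℝ}

theorem intervalIntegrable_div_mul_deriv (hf : AbsolutelyContinuousOnInterval f a b) (c : ℝ) :
    IntervalIntegrable (fun t => f t / c * deriv f t) volume a b :=
  hf.intervalIntegrable_deriv.continuousOn_mul (hf.continuousOn.div_const c)

theorem integral_div_mul_deriv (hf : AbsolutelyContinuousOnInterval f a b) (c : ℝ) :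
    ∫ t in a..b, f t / c * deriv f t = f b ^ 2 / (2 * c) - f a ^ 2 / (2 * c) :=
  calc
    ∫ t in a..b, f t / c * deriv f t
      = ∫ t in a..b, (2 * c)⁻¹ * (deriv f t * f t + f t * deriv f t) := by
        congr with t
        ring
    _ = (2 * c)⁻¹ * (f b * f b - f a * f a) := by
        rw [intervalIntegral.integral_const_mul, hf.integral_deriv_mul_eq_sub hf]
    _ = f b ^ 2 / (2 * c) - f a ^ 2 / (2 * c) := by ring

end AbsolutelyContinuous

theorem backlash_inductor_power {L h φ φ' s I : ℝ} (hI : I = φ / L + h / L * s)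
    (hs : s * φ' = |φ'|) : I * φ' = φ / L * φ' + h / L * |φ'| := by
  rw [hI, ← hs]
  ring

theorem backlash_rlc_power_balance {L C R h φ φ' Q s I v : ℝ} (hI : I = φ / L + h / L * s)
    (hs : s * φ' = |φ'|) (hKVL : φ' = v - R * I - Q / C) :
    φ / L * φ' + Q / C * I = I * v - R * I ^ 2 - h / L * |φ'| := by
  have source_power : I * v = I * φ' + R * I ^ 2 + Q / C * I := by
    rw [hKVL]
    ring
  linarith [backlash_inductor_power hI hs]

theorem stmt18_general {L C R h : ℝ} (hL : L ≠ 0) (hC : C ≠ 0) {φ Q v s I H : ℝ → ℝ} {t₀ t₁ : ℝ}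
    (hφ : AbsolutelyContinuousOnInterval φ t₀ t₁) (hQ : AbsolutelyContinuousOnInterval Q t₀ t₁)
    (hs : ∀ᵐ t ∂volume.restrict (Ι t₀ t₁), s t * deriv φ t = |deriv φ t|)
    (hI : ∀ᵐ t ∂volume.restrict (Ι t₀ t₁), I t = φ t / L + h / L * s t)
    (hKVL : ∀ᵐ t ∂volume.restrict (Ι t₀ t₁), deriv φ t = v t - R * I t - Q t / C)
    (hcharge : ∀ᵐ t ∂volume.restrict (Ι t₀ t₁), deriv Q t = I t)
    (hH : ∀ t, H t = φ t ^ 2 / (2 * L) + Q t ^ 2 / (2 * C)) :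
    H t₁ - H t₀ = ∫ t in t₀..t₁, (I t * v t - R * I t ^ 2 - h / L * |deriv φ t|) :=
  calc
    H t₁ - H t₀
      = (φ t₁ ^ 2 / (2 * L) - φ t₀ ^ 2 / (2 * L))
          + (Q t₁ ^ 2 / (2 * C) - Q t₀ ^ 2 / (2 * C)) := by
        rw [hH, hH]
        ring
    _ = ∫ t in t₀..t₁, (φ t / L * deriv φ t + Q t / C * deriv Q t) := by
        rw [intervalIntegral.integral_add (intervalIntegrable_div_mul_deriv hφ L)
          (intervalIntegrable_div_mul_deriv hQ C), integral_div_mul_deriv hφ,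
          integral_div_mul_deriv hQ]
    _ = ∫ t in t₀..t₁, (I t * v t - R * I t ^ 2 - h / L * |deriv φ t|) := by
        apply intervalIntegral.integral_congr_ae_restrict
        filter_upwards [hs, hI, hKVL, hcharge] with t hs hI hKVL hcharge
        rw [hcharge]
        exact backlash_rlc_power_balance hI hs hKVL

theorem stmt18 (L C R h : ℝ) (hL : 0 < L) (hC : 0 < C) (hR : 0 < R) (hh : 0 ≤ h)
    (φ Q v s : ℝ → ℝ)
    (hφ : Differentiable ℝ φ) (hQ : Differentiable ℝ Q) (hv : Continuous v)
    (hscont : Continuous s)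
    (hs1 : ∀ t, |s t| ≤ 1) (hs2 : ∀ t, s t * deriv φ t = |deriv φ t|)
    (I : ℝ → ℝ) (hI : ∀ t, I t = φ t / L + (h / L) * s t)
    (hode1 : ∀ t, deriv φ t = v t - R * I t - Q t / C)
    (hode2 : ∀ t, deriv Q t = I t)
    (H : ℝ → ℝ) (hH : ∀ t, H t = φ t ^ 2 / (2 * L) + Q t ^ 2 / (2 * C)) :
    ∀ t₀ t₁ : ℝ, t₀ ≤ t₁ →
      H t₁ - H t₀ =
        ∫ t in t₀..t₁, (I t * v t - R * I t ^ 2 - (h / L) * |deriv φ t|) := by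
  intro t₀ t₁ _
  have hφcont := hφ.continuous
  have hQcont := hQ.continuous
  have hIcont : Continuous I := funext hI ▸ by fun_prop
  exact stmt18_general hL.ne' hC.ne'
    (absolutelyContinuousOnInterval_of_deriv_eq_continuous hφ hode1 (by fun_prop) t₀ t₁)
    (absolutelyContinuousOnInterval_of_deriv_eq_continuous hQ hode2 hIcont t₀ t₁)
    (.of_forall hs2) (.of_forall hI) (.of_forall hode1) (.of_forall hode2) hH
end

section
/- (Passivity of the series RLC network with backlash inductor.) For all t₀ ≤ t₁, H(t₁) − H(t₀) ≤ ∫_{t₀}^{t₁} I(t)·v(t) dt; that is, the series network is passive with respect to the port (v, I) with supply rate I·v. -/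
/-!
With `V = φ'` the voltage across the inductor, the inductor stores energy at the rate
`(φ / L) * V = I * V - (h / L) * |V|`, because `s * V = |V|`. Adding the capacitor's rate
`I * (Q / C)` and using Kirchhoff's voltage law `V + R * I + Q / C = v`, the total energy grows at
the rate `I * v - R * I ^ 2 - (h / L) * |V|`, which never exceeds the supply rate `I * v`.
-/

theorem hasDerivAt_sq_div_two_mul {𝕜 : Type*} [NontriviallyNormedField 𝕜] [NeZero (2 : 𝕜)]
    {x : 𝕜 → 𝕜} {x' t : 𝕜} (hx : HasDerivAt x x' t) (a : 𝕜) :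
    HasDerivAt (fun τ => x τ ^ 2 / (2 * a)) (x t / a * x') t := by
  refine ((hx.fun_pow 2).div_const (2 * a)).congr_deriv ?_
  calc (2 : ℕ) * x t ^ (2 - 1) * x' / (2 * a) = 2 * (x t * x') / (2 * a) := by
        push_cast; ring
    _ = x t * x' / a := mul_div_mul_left _ _ two_ne_zero
    _ = x t / a * x' := mul_div_right_comm _ _ _

theorem hasDerivAt_backlashInductor_energy {L h i V σ t : ℝ} {φ : ℝ → ℝ}
    (hφ : HasDerivAt φ V t) (hi : i = φ t / L + h / L * σ) (hσ : σ * V = |V|) :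
    HasDerivAt (fun τ => φ τ ^ 2 / (2 * L)) (i * V - h / L * |V|) t := by
  refine (hasDerivAt_sq_div_two_mul hφ L).congr_deriv ?_
  rw [hi, ← hσ]
  ring

theorem hasDerivAt_seriesRLC_energy {L C R h i u V σ t : ℝ} {φ Q : ℝ → ℝ}
    (hφ : HasDerivAt φ V t) (hQ : HasDerivAt Q i t)
    (hi : i = φ t / L + h / L * σ) (hσ : σ * V = |V|) (hV : V = u - R * i - Q t / C) :
    HasDerivAt (fun τ => φ τ ^ 2 / (2 * L) + Q τ ^ 2 / (2 * C))
      (i * u - R * i ^ 2 - h / L * |V|) t := by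
  have inductor := hasDerivAt_backlashInductor_energy hφ hi hσ
  have capacitor := hasDerivAt_sq_div_two_mul hQ C
  have kirchhoff : u = V + R * i + Q t / C := by linarith
  refine (inductor.add capacitor).congr_deriv ?_
  rw [kirchhoff]
  ring

theorem stmt19_general {L C R h : ℝ} (_hL : L ≠ 0) (_hC : C ≠ 0) (hR : 0 ≤ R) (hh : 0 ≤ h / L)
    {φ Q v s I H : ℝ → ℝ} (hφ : Differentiable ℝ φ) (hQ : Differentiable ℝ Q)
    (hs : ∀ t, s t * deriv φ t = |deriv φ t|)
    (hI : ∀ t, I t = φ t / L + (h / L) * s t)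
    (hode1 : ∀ t, deriv φ t = v t - R * I t - Q t / C)
    (hode2 : ∀ t, deriv Q t = I t)
    (hH : ∀ t, H t = φ t ^ 2 / (2 * L) + Q t ^ 2 / (2 * C))
    {t₀ t₁ : ℝ} (ht : t₀ ≤ t₁)
    (hIv : IntervalIntegrable (fun t => I t * v t) MeasureTheory.volume t₀ t₁) :
    H t₁ - H t₀ ≤ ∫ t in t₀..t₁, I t * v t := by
  have energy_rate (t : ℝ) :
      HasDerivAt H (I t * v t - R * I t ^ 2 - h / L * |deriv φ t|) t := by
    rw [funext hH]
    exact hasDerivAt_seriesRLC_energy (hφ t).hasDerivAt (hode2 t ▸ (hQ t).hasDerivAt)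
      (hI t) (hs t) (hode1 t)
  have rate_le_supply (t : ℝ) :
      I t * v t - R * I t ^ 2 - h / L * |deriv φ t| ≤ I t * v t := by
    have resistor_loss : 0 ≤ R * I t ^ 2 := by positivity
    have hysteresis_loss : 0 ≤ h / L * |deriv φ t| := mul_nonneg hh (abs_nonneg _)
    linarith
  exact intervalIntegral.sub_le_integral_of_hasDeriv_right_of_le ht
    (fun t _ => (energy_rate t).continuousAt.continuousWithinAt)
    (fun t _ => (energy_rate t).hasDerivWithinAt)
    ((intervalIntegrable_iff_integrableOn_Icc_of_le ht).mp hIv)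
    (fun t _ => rate_le_supply t)

theorem stmt19 (L C R h : ℝ) (hL : 0 < L) (hC : 0 < C) (hR : 0 < R) (hh : 0 ≤ h)
    (φ Q v s : ℝ → ℝ)
    (hφ : Differentiable ℝ φ) (hQ : Differentiable ℝ Q) (hv : Continuous v)
    (hscont : Continuous s)
    (hs1 : ∀ t, |s t| ≤ 1) (hs2 : ∀ t, s t * deriv φ t = |deriv φ t|)
    (I : ℝ → ℝ) (hI : ∀ t, I t = φ t / L + (h / L) * s t)
    (hode1 : ∀ t, deriv φ t = v t - R * I t - Q t / C)
    (hode2 : ∀ t, deriv Q t = I t)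
    (H : ℝ → ℝ) (hH : ∀ t, H t = φ t ^ 2 / (2 * L) + Q t ^ 2 / (2 * C)) :
    ∀ t₀ t₁ : ℝ, t₀ ≤ t₁ →
      H t₁ - H t₀ ≤ ∫ t in t₀..t₁, I t * v t := by
  have hIcont : Continuous I :=
    funext hI ▸ (hφ.continuous.div_const L).add (hscont.const_mul (h / L))
  exact fun _ _ ht => stmt19_general hL.ne' hC.ne' hR.le (div_nonneg hh hL.le) hφ hQ hs2 hI
    hode1 hode2 hH ht ((hIcont.mul hv).intervalIntegrable _ _)
end
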